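/- arXiv:2604.09546 — 2 statements merged into one kernel-verified Lean document; each statement's English description precedes it below -/
import Mathlib

section
/- Let γ > 3 and let ν ∈ C²([0,1]) satisfy ν > 0 on [0,1), ν(1) = 0, ν′(0) = 0, ν′(1) < 0, and ν″(r) + ν′(r)/r + ν(r)^γ = 0 for r ∈ (0,1). Define Γ : ℝ² → ℝ by Γ(z) = ν(|z|) for |z| ≤ 1 and Γ(z) = ν′(1)log|z| for |z| > 1. Then: (i) Γ ∈ C²(ℝ²); (ii) ΔΓ(z) + (Γ(z))₊^γ = 0 for every z ∈ ℝ² (classically); and (iii) the positivity set {z ∈ ℝ² : Γ(z) > 0} equals the open unit ball B₁(0). -/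
/-!
Write `Γ z = g ‖z‖`, where the profile `g` on `[0, ∞)` is `ν` on `[0, 1]` and `ν'(1) log r` beyond.

* Profile. By continuity the equation `ν'' + ν'/r + ν ^ γ = 0` extends to the closed interval, where
  `ν'/r` is read as `ν''(0)` at `r = 0`. At `r = 1` this gives `ν''(1) = -ν'(1)`, which is the second
  derivative of the logarithmic tail, so `g` is `C²` on `[0, ∞)` (`hasDerivWithinAt_glue`,
  `continuousOn_glue`).
* Radial functions. If `g` is `C²` on `[0, ∞)` with `g'(0) = 0`, and `p = g'/r` (with
  `p(0) = g''(0)`), then `z ↦ g ‖z‖` has gradient `p(‖z‖) z` (`hasFDerivAt_radial`). This field has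
  derivative `p(r) Id + (g''(r) - p(r)) r⁻² z ⊗ z` (`hasFDerivAt_radialGrad`), which is continuous,
  also at the origin since `g'' - p → 0` there (`continuous_radialHess`). Hence the radial function
  is `C²`, and in the plane its Laplacian is the trace `g'' + p`.

The differential equation then holds on the closed unit ball by the extended equation for `ν`, and
outside because `log` is harmonic and the tail is negative.
-/

noncomputable section

open Real Set

abbrev V2 := EuclideanSpace ℝ (Fin 2)

def pd (f : V2 → ℝ) (i : Fin 2) (x : V2) : ℝ :=
  fderiv ℝ f x (EuclideanSpace.single i 1)

def lap2 (f : V2 → ℝ) (x : V2) : ℝ :=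
  pd (fun y => pd f 0 y) 0 x + pd (fun y => pd f 1 y) 1 x

open Filter Topology

/-! ### Radial functions -/

/-- The quotient `g₁(r) / r`, with the value `c` (meant to be `g₁'(0)`) at `r = 0`. -/
def radialQuot (g₁ : ℝ → ℝ) (c : ℝ) (r : ℝ) : ℝ := if r = 0 then c else g₁ r / r

lemma tendsto_norm_nhdsWithin_Ici {E : Type*} [NormedAddCommGroup E] :
    Tendsto (fun z : E => ‖z‖) (𝓝 0) (𝓝[Ici 0] 0) := by
  refine tendsto_nhdsWithin_iff.mpr ⟨?_, Eventually.of_forall fun z => norm_nonneg z⟩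
  simpa using (continuous_norm (E := E)).tendsto 0

lemma continuous_comp_norm {E : Type*} [NormedAddCommGroup E] {f : ℝ → ℝ} (hf : ContinuousOn f (Ici 0)) :
    Continuous fun z : E => f ‖z‖ :=
  hf.comp_continuous continuous_norm fun z => norm_nonneg z

lemma continuousOn_radialQuot {g₁ : ℝ → ℝ} {c : ℝ} {s : Set ℝ}
    (h0 : g₁ 0 = 0) (hc : ContinuousOn g₁ s) (hd : HasDerivWithinAt g₁ c s 0) :
    ContinuousOn (radialQuot g₁ c) s := by
  intro r hr
  rcases eq_or_ne r 0 with rfl | hr0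
  · rw [← continuousWithinAt_sdiff_self, ContinuousWithinAt]
    have h := hasDerivWithinAt_iff_tendsto_slope.mp hd
    rw [show radialQuot g₁ c 0 = c by simp [radialQuot]]
    refine h.congr' ?_
    filter_upwards [self_mem_nhdsWithin] with x hx
    have hx0 : x ≠ 0 := hx.2
    simp [radialQuot, slope_def_field, h0, hx0]
  · have h : ContinuousWithinAt (fun x => g₁ x / x) s r :=
      (hc r hr).div continuousWithinAt_id hr0
    refine h.congr_of_eventuallyEq ?_ (by simp [radialQuot, hr0])
    filter_upwards [mem_nhdsWithin_of_mem_nhds (isOpen_ne.mem_nhds hr0)] with x hx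
    simp only [radialQuot, if_neg hx]

section Radial

variable {E : Type*} [NormedAddCommGroup E] [InnerProductSpace ℝ E]

/-- The Hessian of `z ↦ g ‖z‖` as an endomorphism, where `g₁ = g'` and `g₂ = g''`. At `z = 0` the
rank-one term vanishes, so the value is `g₂ 0 • id`. -/
def radialHess (g₁ g₂ : ℝ → ℝ) (z : E) : E →L[ℝ] E :=
  radialQuot g₁ (g₂ 0) ‖z‖ • ContinuousLinearMap.id ℝ E +
    ((g₂ ‖z‖ - radialQuot g₁ (g₂ 0) ‖z‖) / ‖z‖ ^ 2) • (innerSL ℝ z).smulRight z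

lemma hasFDerivAt_norm_of_ne {z : E} (hz : z ≠ 0) :
    HasFDerivAt (fun y : E => ‖y‖) (‖z‖⁻¹ • innerSL ℝ z) z := by
  have hn : ‖z‖ ≠ 0 := norm_ne_zero_iff.mpr hz
  have h := (hasStrictFDerivAt_norm_sq z).hasFDerivAt.sqrt (pow_ne_zero 2 hn)
  have e : (fun y : E => √(‖y‖ ^ 2)) = fun y => ‖y‖ := by
    funext y; exact Real.sqrt_sq (norm_nonneg y)
  rw [e] at h
  convert h using 1
  rw [Real.sqrt_sq (norm_nonneg z)]
  ext v
  simp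
  field_simp

variable {g g₁ g₂ : ℝ → ℝ}

lemma hasFDerivAt_radial (hg : ∀ r, 0 ≤ r → HasDerivWithinAt g (g₁ r) (Ici 0) r)
    (h0 : g₁ 0 = 0) (c : ℝ) (z : E) :
    HasFDerivAt (fun y : E => g ‖y‖) (radialQuot g₁ c ‖z‖ • innerSL ℝ z) z := by
  rcases eq_or_ne z 0 with rfl | hz
  · have h := (hasDerivWithinAt_iff_isLittleO.mp (hg 0 le_rfl)).comp_tendsto
      (tendsto_norm_nhdsWithin_Ici (E := E))
    rw [hasFDerivAt_iff_isLittleO]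
    refine Asymptotics.IsLittleO.of_norm_right ?_
    simpa [Function.comp_def, h0] using h
  · have hn : 0 < ‖z‖ := norm_pos_iff.mpr hz
    have h := ((hg _ hn.le).hasDerivAt (Ici_mem_nhds hn)).comp_hasFDerivAt z
      (hasFDerivAt_norm_of_ne hz)
    refine h.congr_fderiv ?_
    rw [smul_smul, radialQuot, if_neg hn.ne', div_eq_mul_inv]

lemma hasFDerivAt_radialGrad (hg₁ : ∀ r, 0 ≤ r → HasDerivWithinAt g₁ (g₂ r) (Ici 0) r)
    (h0 : g₁ 0 = 0) (z : E) :
    HasFDerivAt (fun y : E => radialQuot g₁ (g₂ 0) ‖y‖ • y) (radialHess g₁ g₂ z) z := by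
  have hp : ContinuousOn (radialQuot g₁ (g₂ 0)) (Ici 0) :=
    continuousOn_radialQuot h0 (fun r hr => (hg₁ r hr).continuousWithinAt) (hg₁ 0 le_rfl)
  rcases eq_or_ne z 0 with rfl | hz
  ·
    -- `p(‖y‖) y - p(0) y = o(y)` because `p` is continuous at `0`
    have h1 : Tendsto (fun y : E => radialQuot g₁ (g₂ 0) ‖y‖ - radialQuot g₁ (g₂ 0) 0)
        (𝓝 0) (𝓝 0) := by
      have := ((continuous_comp_norm (E := E) hp).tendsto 0).sub_const (radialQuot g₁ (g₂ 0) 0)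
      simpa using this
    have h2 := ((Asymptotics.isLittleO_one_iff ℝ).mpr h1).smul_isBigO
      (Asymptotics.isBigO_refl (fun y : E => y) (𝓝 0))
    rw [hasFDerivAt_iff_isLittleO]
    simpa [radialHess, sub_smul] using h2
  · have hn : 0 < ‖z‖ := norm_pos_iff.mpr hz
    have hq : HasDerivAt (radialQuot g₁ (g₂ 0)) ((g₂ ‖z‖ * ‖z‖ - g₁ ‖z‖ * 1) / ‖z‖ ^ 2) ‖z‖ := by
      have h := ((hg₁ _ hn.le).hasDerivAt (Ici_mem_nhds hn)).div (hasDerivAt_id _) hn.ne'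
      refine h.congr_of_eventuallyEq ?_
      filter_upwards [isOpen_ne.mem_nhds hn.ne'] with x hx
      simp only [radialQuot, if_neg hx]
      rfl
    have h := (hq.comp_hasFDerivAt z (hasFDerivAt_norm_of_ne hz)).smul (hasFDerivAt_id z)
    refine h.congr_fderiv ?_
    ext1 v
    simp only [radialHess, radialQuot, if_neg hn.ne', add_apply,
      smul_apply, ContinuousLinearMap.smulRight_apply, Function.comp_apply,
      ContinuousLinearMap.id_apply, id, smul_smul, smul_eq_mul]
    congr 2
    field_simp

lemma continuous_radialHess (hg₁ : ∀ r, 0 ≤ r → HasDerivWithinAt g₁ (g₂ r) (Ici 0) r)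
    (hg₂ : ContinuousOn g₂ (Ici 0)) (h0 : g₁ 0 = 0) :
    Continuous (radialHess (E := E) g₁ g₂) := by
  have hp : Continuous fun z : E => radialQuot g₁ (g₂ 0) ‖z‖ :=
    continuous_comp_norm <| continuousOn_radialQuot h0
      (fun r hr => (hg₁ r hr).continuousWithinAt) (hg₁ 0 le_rfl)
  have hs : Continuous fun z : E => g₂ ‖z‖ - radialQuot g₁ (g₂ 0) ‖z‖ :=
    (continuous_comp_norm hg₂).sub hp
  refine (hp.smul continuous_const).add (continuous_iff_continuousAt.mpr fun z => ?_)
  rcases eq_or_ne z 0 with rfl | hz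
  · have hlim : Tendsto (fun z : E => ‖g₂ ‖z‖ - radialQuot g₁ (g₂ 0) ‖z‖‖) (𝓝 0) (𝓝 0) := by
      simpa [radialQuot] using (hs.norm).tendsto 0
    rw [ContinuousAt]
    simp only [map_zero, ContinuousLinearMap.smulRight_zero, smul_zero]
    refine squeeze_zero_norm (fun z => ?_) hlim
    rw [norm_smul, ContinuousLinearMap.norm_smulRight_apply, innerSL_apply_norm, norm_div,
      norm_pow, norm_norm]
    rcases eq_or_ne ‖z‖ 0 with h | h
    · simp [h]
    · field_simp
      exact le_rfl
  · have hc : Continuous fun z : E => (innerSL ℝ z).smulRight z := by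
      fun_prop
    exact (hs.continuousAt.div (continuous_norm.pow 2).continuousAt
      (pow_ne_zero 2 (norm_ne_zero_iff.mpr hz))).smul hc.continuousAt

lemma contDiff_radial (hg : ∀ r, 0 ≤ r → HasDerivWithinAt g (g₁ r) (Ici 0) r)
    (hg₁ : ∀ r, 0 ≤ r → HasDerivWithinAt g₁ (g₂ r) (Ici 0) r)
    (hg₂ : ContinuousOn g₂ (Ici 0)) (h0 : g₁ 0 = 0) :
    ContDiff ℝ 2 fun z : E => g ‖z‖ := by
  have h1 : ContDiff ℝ 1 fun z : E => radialQuot g₁ (g₂ 0) ‖z‖ • z :=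
    contDiff_one_iff_hasFDerivAt.mpr
      ⟨_, continuous_radialHess hg₁ hg₂ h0, hasFDerivAt_radialGrad hg₁ h0⟩
  refine (contDiff_succ_iff_hasFDerivAt (n := 1)).mpr
    ⟨fun z => innerSL ℝ (radialQuot g₁ (g₂ 0) ‖z‖ • z), ?_, fun z => ?_⟩
  · exact (innerSL ℝ (E := E)).contDiff.comp h1
  · simpa using hasFDerivAt_radial hg h0 (g₂ 0) z

end Radial

/-- The polar form `g'' + g' / r` of the planar Laplacian of a radial function; at the origin
it reads `2 g''(0)`. -/
lemma lap2_radial {g g₁ g₂ : ℝ → ℝ} (hg : ∀ r, 0 ≤ r → HasDerivWithinAt g (g₁ r) (Ici 0) r)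
    (hg₁ : ∀ r, 0 ≤ r → HasDerivWithinAt g₁ (g₂ r) (Ici 0) r) (h0 : g₁ 0 = 0) (z : V2) :
    lap2 (fun y => g ‖y‖) z = g₂ ‖z‖ + radialQuot g₁ (g₂ 0) ‖z‖ := by
  have hpd : ∀ i, pd (fun y => pd (fun y => g ‖y‖) i y) i z =
      radialQuot g₁ (g₂ 0) ‖z‖ +
        (g₂ ‖z‖ - radialQuot g₁ (g₂ 0) ‖z‖) / ‖z‖ ^ 2 * (z i * z i) := by
    intro i
    have e : (fun y => pd (fun y => g ‖y‖) i y) =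
        fun y => EuclideanSpace.proj (𝕜 := ℝ) i (radialQuot g₁ (g₂ 0) ‖y‖ • y) := by
      funext y
      simp [pd, (hasFDerivAt_radial hg h0 (g₂ 0) y).fderiv, EuclideanSpace.inner_single_right]
    have h := (EuclideanSpace.proj (𝕜 := ℝ) i).hasFDerivAt.comp z (hasFDerivAt_radialGrad hg₁ h0 z)
    rw [e, pd]
    erw [h.fderiv]
    simp [radialHess, EuclideanSpace.inner_single_right]
  rw [lap2, hpd, hpd]
  have hn : ‖z‖ ^ 2 = z 0 * z 0 + z 1 * z 1 := by
    rw [EuclideanSpace.real_norm_sq_eq, Fin.sum_univ_two]; ring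
  rcases eq_or_ne z 0 with rfl | hz
  · simp [radialQuot]
  · have : ‖z‖ ^ 2 ≠ 0 := pow_ne_zero 2 (norm_ne_zero_iff.mpr hz)
    linear_combination (norm := skip)
      -(g₂ ‖z‖ - radialQuot g₁ (g₂ 0) ‖z‖) / ‖z‖ ^ 2 * hn
    field_simp
    ring

/-! ### Matching at the unit radius -/

lemma continuousOn_glue {a b : ℝ → ℝ} (ha : ContinuousOn a (Icc 0 1))
    (hb : ContinuousOn b (Ici 1)) (h : a 1 = b 1) :
    ContinuousOn (fun r => if r ≤ 1 then a r else b r) (Ici 0) := by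
  have h1 : ContinuousOn (fun r => if r ≤ 1 then a r else b r) (Icc 0 1) :=
    ha.congr fun r hr => if_pos hr.2
  have h2 : ContinuousOn (fun r => if r ≤ 1 then a r else b r) (Ici 1) := by
    refine hb.congr fun r hr => ?_
    rcases (mem_Ici.mp hr).eq_or_lt with rfl | hr
    · simp [h]
    · simp [hr]
  rw [← Icc_union_Ici_eq_Ici (zero_le_one' ℝ)]
  exact h1.union_of_isClosed h2 isClosed_Icc isClosed_Ici

lemma hasDerivWithinAt_glue {a b a' b' : ℝ → ℝ}
    (ha : ∀ r ∈ Icc (0 : ℝ) 1, HasDerivWithinAt a (a' r) (Icc 0 1) r)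
    (hb : ∀ r, 1 ≤ r → HasDerivAt b (b' r) r) (h : a 1 = b 1) (h' : a' 1 = b' 1)
    (r : ℝ) (hr : 0 ≤ r) :
    HasDerivWithinAt (fun r => if r ≤ 1 then a r else b r) (if r ≤ 1 then a' r else b' r)
      (Ici 0) r := by
  have ea : ∀ x ∈ Icc (0 : ℝ) 1, (if x ≤ 1 then a x else b x) = a x := fun x hx => if_pos hx.2
  have eb : ∀ x ∈ Ici (1 : ℝ), (if x ≤ 1 then a x else b x) = b x := by
    intro x hx
    rcases (mem_Ici.mp hx).eq_or_lt with rfl | hx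
    · simp [h]
    · simp [hx]
  rcases lt_trichotomy r 1 with h1 | rfl | h1
  · rw [if_pos h1.le]
    refine ((ha r ⟨hr, h1.le⟩).congr ea (ea r ⟨hr, h1.le⟩)).mono_of_mem_nhdsWithin ?_
    filter_upwards [self_mem_nhdsWithin, mem_nhdsWithin_of_mem_nhds (Iio_mem_nhds h1)] with x hx hx'
    exact ⟨hx, le_of_lt hx'⟩
  · rw [if_pos le_rfl, ← Icc_union_Ici_eq_Ici (zero_le_one' ℝ)]
    refine ((ha 1 ⟨hr, le_rfl⟩).congr ea (ea 1 ⟨hr, le_rfl⟩)).union ?_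
    rw [h']
    exact (hb 1 le_rfl).hasDerivWithinAt.congr eb (eb 1 self_mem_Ici)
  · rw [if_neg h1.not_ge]
    refine ((hb r h1.le).congr_of_eventuallyEq ?_).hasDerivWithinAt
    filter_upwards [Ici_mem_nhds h1] with x hx using eb x hx

/-- The radial equation on `(0, 1)` extends to `[0, 1]` by continuity. -/
lemma radial_ode_closed {γ : ℝ} (hγ : 0 < γ) {ν ν' ν'' : ℝ → ℝ}
    (hd1 : ∀ r ∈ Icc (0 : ℝ) 1, HasDerivWithinAt ν (ν' r) (Icc 0 1) r)
    (hd2 : ∀ r ∈ Icc (0 : ℝ) 1, HasDerivWithinAt ν' (ν'' r) (Icc 0 1) r)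
    (hd2c : ContinuousOn ν'' (Icc 0 1)) (hd0 : ν' 0 = 0)
    (hODE : ∀ r ∈ Ioo (0 : ℝ) 1, ν'' r + ν' r / r + ν r ^ γ = 0) :
    ∀ r ∈ Icc (0 : ℝ) 1, ν'' r + radialQuot ν' (ν'' 0) r + ν r ^ γ = 0 := by
  have hq : ContinuousOn (radialQuot ν' (ν'' 0)) (Icc 0 1) :=
    continuousOn_radialQuot hd0 (fun r hr => (hd2 r hr).continuousWithinAt)
      (hd2 0 (by simp))
  have hν : ContinuousOn ν (Icc 0 1) := fun r hr => (hd1 r hr).continuousWithinAt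
  have h : EqOn (fun r => ν'' r + radialQuot ν' (ν'' 0) r + ν r ^ γ) (fun _ => 0) (Ioo 0 1) := by
    intro r hr
    simpa [radialQuot, hr.1.ne'] using hODE r hr
  exact h.of_subset_closure
    ((hd2c.add hq).add (hν.rpow_const fun r _ => Or.inr hγ.le)) continuousOn_const
    Ioo_subset_Icc_self (by rw [closure_Ioo zero_ne_one])

/-- The radial profile Γ, obtained by matching the Dirichlet ground
state ν on the unit ball of ℝ² with the harmonic tail ν′(1)·log|z| outside, is a
classical C² solution of ΔΓ + Γ₊^γ = 0 in ℝ² with positivity set {Γ > 0} = B₁(0). -/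
theorem Gamma_classical_solution
    (γ : ℝ) (hγ : 3 < γ) (ν ν' ν'' : ℝ → ℝ)
    (hd1 : ∀ r ∈ Set.Icc (0 : ℝ) 1, HasDerivWithinAt ν (ν' r) (Set.Icc 0 1) r)
    (hd2 : ∀ r ∈ Set.Icc (0 : ℝ) 1, HasDerivWithinAt ν' (ν'' r) (Set.Icc 0 1) r)
    (hd2c : ContinuousOn ν'' (Set.Icc 0 1))
    (hpos : ∀ r ∈ Set.Ico (0 : ℝ) 1, 0 < ν r)
    (hb : ν 1 = 0) (hd0 : ν' 0 = 0) (hd1' : ν' 1 < 0)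
    (hODE : ∀ r ∈ Set.Ioo (0 : ℝ) 1, ν'' r + ν' r / r + ν r ^ γ = 0)
    (Γfun : V2 → ℝ)
    (hΓ : Γfun = fun z => if ‖z‖ ≤ 1 then ν ‖z‖ else ν' 1 * Real.log ‖z‖) :
    ContDiff ℝ 2 Γfun
    ∧ (∀ z : V2, lap2 Γfun z + max (Γfun z) 0 ^ γ = 0)
    ∧ {z : V2 | 0 < Γfun z} = Metric.ball 0 1 := by
  have hγ0 : 0 < γ := by linarith
  have hode := radial_ode_closed hγ0 hd1 hd2 hd2c hd0 hODE
  have hν2 : ν'' 1 = -ν' 1 := by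
    have := hode 1 (by simp)
    simp only [radialQuot, one_ne_zero, if_false, hb, Real.zero_rpow hγ0.ne', div_one] at this
    linarith
  have hg := hasDerivWithinAt_glue (b := fun r => ν' 1 * Real.log r) (b' := fun r => ν' 1 * r⁻¹) hd1
    (fun r hr => (Real.hasDerivAt_log (by linarith)).const_mul _) (by simp [hb]) (by simp)
  have hg₁ := hasDerivWithinAt_glue (b := fun r => ν' 1 * r⁻¹)
    (b' := fun r => ν' 1 * -(r ^ 2)⁻¹) hd2
    (fun r hr => (hasDerivAt_inv (by linarith)).const_mul _) (by simp) (by simp [hν2])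
  have hg₂ := continuousOn_glue (b := fun r => ν' 1 * -(r ^ 2)⁻¹) hd2c
    (by
      refine continuousOn_const.mul (ContinuousOn.neg (ContinuousOn.inv₀ (by fun_prop) ?_))
      intro r hr
      have : (1 : ℝ) ≤ r := hr
      positivity) (by simp [hν2])
  have h0 : (fun r : ℝ => if r ≤ 1 then ν' r else ν' 1 * r⁻¹) 0 = 0 := by simp [hd0]
  have hnonneg : ∀ r ∈ Icc (0 : ℝ) 1, 0 ≤ ν r := by
    intro r hr
    rcases hr.2.eq_or_lt with rfl | h
    · exact hb.ge
    · exact (hpos r ⟨hr.1, h⟩).le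
  have htail : ∀ r : ℝ, 1 < r → ν' 1 * Real.log r < 0 := fun r hr =>
    mul_neg_of_neg_of_pos hd1' (Real.log_pos hr)
  subst hΓ
  refine ⟨contDiff_radial hg hg₁ hg₂ h0, fun z => ?_, ?_⟩
  · rw [lap2_radial hg hg₁ h0 z]
    rcases le_or_gt ‖z‖ 1 with h | h
    · have hz : ‖z‖ ∈ Icc (0 : ℝ) 1 := ⟨norm_nonneg z, h⟩
      have := hode _ hz
      simpa [radialQuot, h, max_eq_left (hnonneg _ hz)] using this
    · have hz : ‖z‖ ≠ 0 := by linarith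
      simp only [radialQuot, if_neg h.not_ge, if_neg hz, max_eq_right (htail _ h).le,
        Real.zero_rpow hγ0.ne']
      field_simp
      ring
  · ext z
    simp only [mem_ofPred_eq, mem_ball_zero_iff]
    rcases lt_trichotomy ‖z‖ 1 with h | h | h
    · simp [h.le, h, hpos _ ⟨norm_nonneg z, h⟩]
    · simp [h, hb]
    · simp only [if_neg h.not_ge, h.not_gt, iff_false, not_lt]
      exact (htail _ h).le
end
end

section
/- Let f : (0,1] → ℝ be continuous and bounded, with M = sup_{(0,1]}|f|. Define h(s) = s³ ∫_s^1 r^{−7} ( ∫_0^r t⁵ f(t) dt ) dr for s ∈ (0,1]. Then: (i) h is twice continuously differentiable on (0,1) and satisfies h″(s) + h′(s)/s − 9h(s)/s² + s·f(s) = 0 for all s ∈ (0,1); (ii) |h(s)| ≤ (M/6)·s³·log(1/s) for all s ∈ (0,1]; and (iii) the function H : B₁(0)∖{0} → ℝ defined by H(z) = h(|z|)·Re(z³)/|z|³ (identifying z ∈ ℝ² with a complex number) satisfies ΔH(z) + |z|·f(|z|)·Re(z³)/|z|³ = 0 for all 0 < |z| < 1. -/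
/-!
Write `G r = ∫₀^r t⁵ f(t) dt` and `g s = ∫_s^1 G(r) / r⁷ dr`, so that `h = s³ g`. By the fundamental
theorem of calculus `G' = s⁵ f` and `g' = -G / s⁷` on `(0,1)`, whence `h' = 3 s² g - G / s⁴` and
`h'' = 6 s g + G / s⁵ - s f`; the ODE is then an algebraic identity. The bound follows from
`|G r| ≤ M r⁶ / 6`. For the Laplacian, `H = g(|z|) P(z)` with `P = Re z³ = x³ - 3xy²` harmonic and
homogeneous of degree 3. Thus `∂ᵢH = ∂ᵢP · g(|z|) - P zᵢ · (G / s⁸)(|z|)` on the punctured disc, and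
differentiating once more the terms in `g` cancel by harmonicity and those in `G` by homogeneity
(`lap2_radial_mul_cubic`).
-/

noncomputable section

open Real Set

/-- The chain rule for a radial function, away from the origin. -/
lemma hasFDerivAt_radial_s14 {φ : ℝ → ℝ} {c : ℝ} {z : V2} (hz : 0 < ‖z‖)
    (hφ : HasDerivAt φ c ‖z‖) :
    HasFDerivAt (fun y : V2 => φ ‖y‖) ((c / ‖z‖) • innerSL ℝ z) z := by
  have h1 : HasFDerivAt (fun y : V2 => ‖y‖ ^ 2) (2 • innerSL ℝ z) z :=
    (hasStrictFDerivAt_norm_sq z).hasFDerivAt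
  have h2 : HasFDerivAt (fun y : V2 => ‖y‖) (‖z‖⁻¹ • innerSL ℝ z) z := by
    have h3 := h1.sqrt (by positivity)
    simp only [Real.sqrt_sq (norm_nonneg _)] at h3
    refine h3.congr_fderiv ?_
    ext v
    simp
    field_simp
  refine (hφ.comp_hasFDerivAt z h2).congr_fderiv ?_
  ext v
  simp
  field_simp

lemma innerSL_single (z : V2) (i : Fin 2) :
    innerSL ℝ z (EuclideanSpace.single i (1 : ℝ)) = z i := by
  simp [EuclideanSpace.inner_single_right]

lemma hasFDerivAt_coord (z : V2) (i : Fin 2) :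
    HasFDerivAt (fun y : V2 => y i) (EuclideanSpace.proj i : V2 →L[ℝ] ℝ) z :=
  (EuclideanSpace.proj i : V2 →L[ℝ] ℝ).hasFDerivAt

lemma pd_eq {F : V2 → ℝ} {F' : V2 →L[ℝ] ℝ} {z : V2} (h : HasFDerivAt F F' z) (i : Fin 2) :
    pd F i z = F' (EuclideanSpace.single i 1) := by
  rw [pd, h.fderiv]

lemma pd_congr {F K : V2 → ℝ} {z : V2} (h : F =ᶠ[nhds z] K) (i : Fin 2) :
    pd F i z = pd K i z := by
  rw [pd, pd, h.fderiv_eq]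

/-- `x³ - 3xy² = Re (x + iy)³`. -/
def cubic (z : V2) : ℝ := z 0 ^ 3 - 3 * z 0 * z 1 ^ 2

lemma cubic_eq (z : V2) : (((z 0 : ℂ) + (z 1 : ℂ) * Complex.I) ^ 3).re = cubic z := by
  simp [cubic, pow_succ]
  ring

lemma hasFDerivAt_cubic (z : V2) :
    HasFDerivAt cubic ((3 * z 0 ^ 2 - 3 * z 1 ^ 2) • (EuclideanSpace.proj 0 : V2 →L[ℝ] ℝ)
      - (6 * z 0 * z 1) • (EuclideanSpace.proj 1 : V2 →L[ℝ] ℝ)) z := by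
  have h0 := hasFDerivAt_coord z 0
  have h1 := hasFDerivAt_coord z 1
  refine ((h0.pow 3).sub ((h0.const_mul 3).mul (h1.pow 2))).congr_fderiv ?_
  ext v
  simp
  ring

/-- The Laplacian of `g(|z|) Re z³`, when `g' = -G / s⁷` and `G' = s⁵ f` on `(0,1)`. -/
lemma lap2_radial_mul_cubic {f g G : ℝ → ℝ}
    (hg : ∀ s ∈ Set.Ioo (0 : ℝ) 1, HasDerivAt g (-(G s / s ^ 7)) s)
    (hG : ∀ s ∈ Set.Ioo (0 : ℝ) 1, HasDerivAt G (s ^ 5 * f s) s)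
    {F : V2 → ℝ} (hF : ∀ z : V2, 0 < ‖z‖ → ‖z‖ < 1 → F z = g ‖z‖ * cubic z)
    {z : V2} (hz0 : 0 < ‖z‖) (hz1 : ‖z‖ < 1) :
    lap2 F z = -(f ‖z‖ * cubic z / ‖z‖ ^ 2) := by
  have hopen : IsOpen {y : V2 | 0 < ‖y‖ ∧ ‖y‖ < 1} :=
    (isOpen_lt continuous_const continuous_norm).inter
      (isOpen_lt continuous_norm continuous_const)
  have hev : ∀ y : V2, 0 < ‖y‖ → ‖y‖ < 1 → ∀ᶠ w : V2 in nhds y, 0 < ‖w‖ ∧ ‖w‖ < 1 :=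
    fun y h0 h1 => hopen.mem_nhds ⟨h0, h1⟩
  have hfirst : ∀ y : V2, 0 < ‖y‖ → ‖y‖ < 1 →
      pd F 0 y = g ‖y‖ * (3 * y 0 ^ 2 - 3 * y 1 ^ 2) - G ‖y‖ / ‖y‖ ^ 8 * (cubic y * y 0) ∧
      pd F 1 y = g ‖y‖ * (-6 * (y 0 * y 1)) - G ‖y‖ / ‖y‖ ^ 8 * (cubic y * y 1) := by
    intro y h0 h1
    have hd : HasFDerivAt (fun w : V2 => g ‖w‖ * cubic w) _ y :=
      (hasFDerivAt_radial_s14 h0 (hg _ ⟨h0, h1⟩)).mul (hasFDerivAt_cubic y)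
    have hc : F =ᶠ[nhds y] fun w => g ‖w‖ * cubic w := by
      filter_upwards [hev y h0 h1] with w hw using hF w hw.1 hw.2
    constructor
    · rw [pd_congr hc, pd_eq hd]
      simp only [add_apply, smul_apply,
        sub_apply, innerSL_single]
      simp
      field_simp
      ring
    · rw [pd_congr hc, pd_eq hd]
      simp only [add_apply, smul_apply,
        sub_apply, innerSL_single]
      simp
      field_simp
      ring
  have hgz := hasFDerivAt_radial_s14 hz0 (hg _ ⟨hz0, hz1⟩)
  have hk : HasDerivAt (fun s => G s / s ^ 8)
      (f ‖z‖ / ‖z‖ ^ 3 - 8 * G ‖z‖ / ‖z‖ ^ 9) ‖z‖ := by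
    refine ((hG _ ⟨hz0, hz1⟩).div (hasDerivAt_pow 8 _) (by positivity)).congr_deriv ?_
    field_simp
    push_cast
    ring
  have hkz := hasFDerivAt_radial_s14 hz0 hk
  have h0 := hasFDerivAt_coord z 0
  have h1 := hasFDerivAt_coord z 1
  have hc := hasFDerivAt_cubic z
  have hd0 : HasFDerivAt (fun y : V2 => g ‖y‖ * (3 * y 0 ^ 2 - 3 * y 1 ^ 2)
      - G ‖y‖ / ‖y‖ ^ 8 * (cubic y * y 0)) _ z := (hgz.mul (((h0.pow 2).const_mul 3).sub ((h1.pow 2).const_mul 3))).sub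
    (hkz.mul (hc.mul h0))
  have hd1 : HasFDerivAt (fun y : V2 => g ‖y‖ * (-6 * (y 0 * y 1))
      - G ‖y‖ / ‖y‖ ^ 8 * (cubic y * y 1)) _ z := (hgz.mul ((h0.mul h1).const_mul (-6))).sub (hkz.mul (hc.mul h1))
  have e0 : (fun y => pd F 0 y) =ᶠ[nhds z] fun y : V2 =>
      g ‖y‖ * (3 * y 0 ^ 2 - 3 * y 1 ^ 2) - G ‖y‖ / ‖y‖ ^ 8 * (cubic y * y 0) := by
    filter_upwards [hev z hz0 hz1] with w hw using (hfirst w hw.1 hw.2).1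
  have e1 : (fun y => pd F 1 y) =ᶠ[nhds z] fun y : V2 =>
      g ‖y‖ * (-6 * (y 0 * y 1)) - G ‖y‖ / ‖y‖ ^ 8 * (cubic y * y 1) := by
    filter_upwards [hev z hz0 hz1] with w hw using (hfirst w hw.1 hw.2).2
  have hn : ‖z‖ ^ 2 = z 0 ^ 2 + z 1 ^ 2 := by
    rw [EuclideanSpace.real_norm_sq_eq, Fin.sum_univ_two]
  rw [lap2, pd_congr e0, pd_congr e1, pd_eq hd0, pd_eq hd1]
  simp only [add_apply, smul_apply,
    sub_apply, innerSL_single]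
  simp
  generalize G ‖z‖ = Gz
  generalize g ‖z‖ = gz
  generalize f ‖z‖ = fz
  generalize ‖z‖ = ρ at *
  generalize hx : z 0 = x at *
  generalize hy : z 1 = y at *
  have hcub : cubic z = x ^ 3 - 3 * x * y ^ 2 := by rw [cubic, hx, hy]
  rw [hcub]
  -- `|z|² = x² + y²` enters only through `P zᵢ ∂ᵢ[(G / s⁸)(|z|)]`, which sums over `i` to
  -- `P (x² + y²)` times the bracket below.
  linear_combination (norm := skip)
    ((x ^ 3 - 3 * x * y ^ 2) * (fz / ρ ^ 4 - 8 * Gz / ρ ^ 10)) * hn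
  field_simp
  ring

lemma intervalIntegrable_moment {f : ℝ → ℝ} {M : ℝ} (hf : ContinuousOn f (Set.Ioc 0 1))
    (hM : ∀ t ∈ Set.Ioc (0 : ℝ) 1, |f t| ≤ M) :
    IntervalIntegrable (fun t => t ^ 5 * f t) MeasureTheory.volume 0 1 := by
  rw [intervalIntegrable_iff_integrableOn_Ioc_of_le zero_le_one]
  have hc : ContinuousOn (fun t => t ^ 5 * f t) (Set.Ioc 0 1) := by fun_prop
  refine MeasureTheory.IntegrableOn.of_bound (by simp)
    (hc.aestronglyMeasurable measurableSet_Ioc) M ?_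
  filter_upwards [MeasureTheory.ae_restrict_mem measurableSet_Ioc] with t ht
  rw [Real.norm_eq_abs, abs_mul, abs_of_nonneg (pow_nonneg ht.1.le 5)]
  have := pow_le_one₀ (n := 5) ht.1.le ht.2
  nlinarith [abs_nonneg (f t), hM t ht]

/-- The mode-3 radial corrector h(s) = s³∫_s^1 r⁻⁷(∫₀^r t⁵f(t)dt)dr
solves h″ + h′/s − 9h/s² + s·f(s) = 0 on (0,1), obeys |h(s)| ≤ (M/6)s³log(1/s), and
H(z) = h(|z|)Re(z³)/|z|³ satisfies ΔH + |z|f(|z|)Re(z³)/|z|³ = 0 on the punctured ball. -/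
theorem mode_three_corrector
    (f : ℝ → ℝ) (hf : ContinuousOn f (Set.Ioc 0 1))
    (hbdd : BddAbove ((fun t => |f t|) '' Set.Ioc 0 1))
    (M : ℝ) (hM : M = sSup ((fun t => |f t|) '' Set.Ioc 0 1))
    (hfun : ℝ → ℝ)
    (hhdef : hfun = fun s => s ^ 3 * ∫ r in s..1, (∫ t in (0 : ℝ)..r, t ^ 5 * f t) / r ^ 7)
    (H : V2 → ℝ)
    (hHdef : H = fun z => hfun ‖z‖ * (((z 0 : ℂ) + (z 1 : ℂ) * Complex.I) ^ 3).re / ‖z‖ ^ 3) :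
    (∃ h' h'' : ℝ → ℝ,
      (∀ s ∈ Set.Ioo (0 : ℝ) 1, HasDerivAt hfun (h' s) s)
      ∧ (∀ s ∈ Set.Ioo (0 : ℝ) 1, HasDerivAt h' (h'' s) s)
      ∧ ContinuousOn h'' (Set.Ioo 0 1)
      ∧ (∀ s ∈ Set.Ioo (0 : ℝ) 1, h'' s + h' s / s - 9 * hfun s / s ^ 2 + s * f s = 0))
    ∧ (∀ s ∈ Set.Ioc (0 : ℝ) 1, |hfun s| ≤ M / 6 * s ^ 3 * Real.log (1 / s))
    ∧ (∀ z : V2, 0 < ‖z‖ → ‖z‖ < 1 →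
        lap2 H z + ‖z‖ * f ‖z‖ * (((z 0 : ℂ) + (z 1 : ℂ) * Complex.I) ^ 3).re / ‖z‖ ^ 3 = 0) := by
  have hfM : ∀ t ∈ Set.Ioc (0 : ℝ) 1, |f t| ≤ M := fun t ht => by
    rw [hM]
    exact le_csSup hbdd ⟨t, ht, rfl⟩
  have hint := intervalIntegrable_moment hf hfM
  have hint' : ∀ r ∈ Set.Icc (0 : ℝ) 1,
      IntervalIntegrable (fun t => t ^ 5 * f t) MeasureTheory.volume 0 r := fun r hr =>
    hint.mono_set (by
      rw [Set.uIcc_of_le hr.1, Set.uIcc_of_le zero_le_one]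
      exact Set.Icc_subset_Icc_right hr.2)
  obtain ⟨G, hGdef⟩ : ∃ G : ℝ → ℝ, G = fun r => ∫ t in (0 : ℝ)..r, t ^ 5 * f t := ⟨_, rfl⟩
  obtain ⟨g, hgdef⟩ : ∃ g : ℝ → ℝ, g = fun s => ∫ r in s..1, G r / r ^ 7 := ⟨_, rfl⟩
  have hh : ∀ s, hfun s = s ^ 3 * g s := fun s => by rw [hhdef, hgdef, hGdef]
  have hfo : ContinuousOn f (Set.Ioo 0 1) := hf.mono Set.Ioo_subset_Ioc_self
  have hG : ∀ s ∈ Set.Ioo (0 : ℝ) 1, HasDerivAt G (s ^ 5 * f s) s := by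
    intro s hs
    have hc : ContinuousOn (fun t => t ^ 5 * f t) (Set.Ioo 0 1) := by fun_prop
    rw [hGdef]
    exact intervalIntegral.integral_hasDerivAt_right (hint' s ⟨hs.1.le, hs.2.le⟩)
      (hc.stronglyMeasurableAtFilter isOpen_Ioo s hs) (hc.continuousAt (isOpen_Ioo.mem_nhds hs))
  have hGc : ContinuousOn G (Set.Icc 0 1) := by
    have := intervalIntegral.continuousOn_primitive_interval' hint (Set.left_mem_uIcc)
    rw [Set.uIcc_of_le zero_le_one] at this
    rw [hGdef]
    exact this
  have hqc : ContinuousOn (fun r => G r / r ^ 7) (Set.Ioc 0 1) :=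
    (hGc.mono Set.Ioc_subset_Icc_self).div (by fun_prop) fun r hr => (pow_pos hr.1 7).ne'
  have hqi : ∀ s ∈ Set.Ioc (0 : ℝ) 1,
      IntervalIntegrable (fun r => G r / r ^ 7) MeasureTheory.volume s 1 := fun s hs =>
    (hqc.mono (by
      rw [Set.uIcc_of_le hs.2]
      exact fun r hr => ⟨hs.1.trans_le hr.1, hr.2⟩)).intervalIntegrable
  have hg : ∀ s ∈ Set.Ioo (0 : ℝ) 1, HasDerivAt g (-(G s / s ^ 7)) s := by
    intro s hs
    have hc := hqc.mono (Set.Ioo_subset_Ioc_self : Set.Ioo (0 : ℝ) 1 ⊆ _)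
    rw [hgdef]
    exact intervalIntegral.integral_hasDerivAt_left (hqi s ⟨hs.1, hs.2.le⟩)
      (hc.stronglyMeasurableAtFilter isOpen_Ioo s hs) (hc.continuousAt (isOpen_Ioo.mem_nhds hs))
  refine ⟨⟨fun s => 3 * s ^ 2 * g s - G s / s ^ 4,
    fun s => 6 * s * g s + G s / s ^ 5 - s * f s, ?_, ?_, ?_, ?_⟩, ?_, ?_⟩
  · intro s hs
    have hs0 := hs.1.ne'
    rw [show hfun = fun s => s ^ 3 * g s from funext hh]
    refine ((hasDerivAt_pow 3 s).mul (hg s hs)).congr_deriv ?_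
    field_simp
    push_cast
    ring
  · intro s hs
    have hs0 := hs.1.ne'
    refine ((((hasDerivAt_pow 2 s).const_mul 3).mul (hg s hs)).sub
      ((hG s hs).div (hasDerivAt_pow 4 s) (pow_ne_zero 4 hs0))).congr_deriv ?_
    field_simp
    push_cast
    ring
  · have h1 : ContinuousOn g (Set.Ioo 0 1) :=
      fun s hs => (hg s hs).continuousAt.continuousWithinAt
    have h2 : ContinuousOn G (Set.Ioo 0 1) :=
      fun s hs => (hG s hs).continuousAt.continuousWithinAt
    have h3 : ContinuousOn (fun s => G s / s ^ 5) (Set.Ioo 0 1) :=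
      h2.div (by fun_prop) fun s hs => (pow_pos hs.1 5).ne'
    fun_prop
  · intro s hs
    have hs0 := hs.1.ne'
    simp only [hh]
    field_simp
    ring
  · intro s hs
    have hGb : ∀ r ∈ Set.Ioc (0 : ℝ) 1, |G r| ≤ M / 6 * r ^ 6 := by
      intro r hr
      have hb := intervalIntegral.norm_integral_le_of_norm_le (μ := MeasureTheory.volume)
        (f := fun t => t ^ 5 * f t) (g := fun t => M * t ^ 5) hr.1.le
        (Filter.Eventually.of_forall fun t ht => by
          rw [Real.norm_eq_abs, abs_mul, abs_of_nonneg (pow_nonneg ht.1.le 5), mul_comm]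
          exact mul_le_mul_of_nonneg_right (hfM t ⟨ht.1, ht.2.trans hr.2⟩)
            (pow_nonneg ht.1.le 5))
        ((by fun_prop : Continuous fun t : ℝ => M * t ^ 5).intervalIntegrable 0 r)
      rw [hGdef]
      refine hb.trans_eq ?_
      rw [intervalIntegral.integral_const_mul, integral_pow]
      norm_num
      ring
    have hgb : |g s| ≤ M / 6 * Real.log (1 / s) := by
      have hb := intervalIntegral.norm_integral_le_of_norm_le (μ := MeasureTheory.volume)
        (f := fun r => G r / r ^ 7) (g := fun r => M / 6 * (1 / r)) hs.2
        (Filter.Eventually.of_forall fun r hr => by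
          have hr0 : 0 < r := hs.1.trans hr.1
          rw [Real.norm_eq_abs, abs_div, abs_of_pos (pow_pos hr0 7), div_le_iff₀ (pow_pos hr0 7)]
          refine (hGb r ⟨hr0, hr.2⟩).trans_eq ?_
          field_simp)
        ((intervalIntegral.intervalIntegrable_one_div (fun r hr => by
          rw [Set.uIcc_of_le hs.2] at hr
          exact (hs.1.trans_le hr.1).ne') continuousOn_id).const_mul _)
      rw [hgdef]
      refine hb.trans_eq ?_
      rw [intervalIntegral.integral_const_mul, integral_one_div_of_pos hs.1 one_pos]
    have hs3 := pow_pos hs.1 3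
    rw [hh, abs_mul, abs_of_pos hs3]
    nlinarith
  · intro z hz0 hz1
    rw [cubic_eq, lap2_radial_mul_cubic hg hG (F := H) ?_ hz0 hz1]
    · field_simp
      ring
    · intro y hy0 hy1
      rw [hHdef]
      simp only [cubic_eq, hh]
      field_simp
end
end
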